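/- Let α ∈ (1,2) and let f, g ∈ L^α(S, μ) be nonzero and satisfy Assumptions (A1) and (A2) with constants ε₁, ε₂. Let β ∈ (0, α/2) and define G(u) := |u|^{−β} for |u| < 1 and G(u) := 1 for |u| ≥ 1. Then there is a finite constant C, depending only on α, β, ε₁, ε₂, ‖f‖_α and ‖g‖_α, such that ∫_ℝ ∫_ℝ |D₁(u,v)| G(u) du dv ≤ C and ∫_ℝ ∫_ℝ |D₂(u,v)| G(u)G(v) du dv ≤ C. (Paper's Lemma 3.6.) -/

import Mathlib

open MeasureTheory Real Set Filter
open scoped ENNReal Topology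

noncomputable def nrm (α : ℝ) {S : Type*} [MeasurableSpace S] (μ : Measure S) (f : S → ℝ) : ℝ :=
  (∫ s, |f s| ^ α ∂μ) ^ (1 / α)

noncomputable def dep2 (α : ℝ) {S : Type*} [MeasurableSpace S] (μ : Measure S) (f g : S → ℝ) : ℝ :=
  ∫ s, |f s * g s| ^ (α / 2) ∂μ

noncomputable def dep1s (α : ℝ) {S : Type*} [MeasurableSpace S] (μ : Measure S) (f g : S → ℝ) : ℝ :=
  ∫ s, |f s| ^ (α - 1) * |g s| ∂μ

noncomputable def dep1 (α : ℝ) {S : Type*} [MeasurableSpace S] (μ : Measure S) (f g : S → ℝ) : ℝ :=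
  dep1s α μ f g + dep1s α μ g f

/-- `f ∈ L^α(S, μ)`. -/
def MemLalpha (α : ℝ) {S : Type*} [MeasurableSpace S] (μ : Measure S) (f : S → ℝ) : Prop :=
  AEStronglyMeasurable f μ ∧ Integrable (fun s => |f s| ^ α) μ

/-- Assumption (A1) with constant ε₁. -/
def A1 (α ε₁ : ℝ) {S : Type*} [MeasurableSpace S] (μ : Measure S) (f g : S → ℝ) : Prop :=
  nrm α μ f ^ (α / 2) * nrm α μ g ^ (α / 2) - dep2 α μ f g
    ≥ ε₁ * (nrm α μ f ^ (α / 2) * nrm α μ g ^ (α / 2))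

/-- Assumption (A2) with constant ε₂. -/
def A2 (α ε₂ : ℝ) {S : Type*} [MeasurableSpace S] (μ : Measure S) (f g : S → ℝ) : Prop :=
  ∀ u v : ℝ, nrm α μ (fun s => u * f s + v * g s) ^ α
    ≥ ε₂ * (|u| ^ α * nrm α μ f ^ α + |v| ^ α * nrm α μ g ^ α)

noncomputable def Ufun (α : ℝ) {S : Type*} [MeasurableSpace S] (μ : Measure S)
    (f g : S → ℝ) (u v : ℝ) : ℝ :=
  Real.exp (-(nrm α μ (fun s => u * f s + v * g s) ^ α)) -
    Real.exp (-(nrm α μ (fun s => u * f s) ^ α) - nrm α μ (fun s => v * g s) ^ α)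

/-- signed power `a^⟨p⟩ = sign(a)|a|^p`. -/
noncomputable def spow (a p : ℝ) : ℝ := Real.sign a * |a| ^ p

noncomputable def D1 (α : ℝ) {S : Type*} [MeasurableSpace S] (μ : Measure S)
    (f g : S → ℝ) (u v : ℝ) : ℝ :=
  -α * (∫ s, spow (u * f s + v * g s) (α - 1) * f s ∂μ) *
      Real.exp (-(nrm α μ (fun s => u * f s + v * g s) ^ α)) +
    α * (∫ s, spow (u * f s) (α - 1) * f s ∂μ) *
      Real.exp (-(nrm α μ (fun s => u * f s) ^ α) - nrm α μ (fun s => v * g s) ^ α)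

noncomputable def D2 (α : ℝ) {S : Type*} [MeasurableSpace S] (μ : Measure S)
    (f g : S → ℝ) (u v : ℝ) : ℝ :=
  -(α * (α - 1)) * (∫ s, (if f s = 0 ∨ g s = 0 then (0:ℝ) else
        |u * f s + v * g s| ^ (α - 2) * (f s * g s)) ∂μ) *
      Real.exp (-(nrm α μ (fun s => u * f s + v * g s) ^ α)) +
    α ^ 2 * (∫ s, spow (u * f s + v * g s) (α - 1) * f s ∂μ) *
      (∫ s, spow (u * f s + v * g s) (α - 1) * g s ∂μ) *
      Real.exp (-(nrm α μ (fun s => u * f s + v * g s) ^ α)) -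
    α ^ 2 * (∫ s, spow (u * f s) (α - 1) * f s ∂μ) *
      (∫ s, spow (v * g s) (α - 1) * g s ∂μ) *
      Real.exp (-(nrm α μ (fun s => u * f s) ^ α) - nrm α μ (fun s => v * g s) ^ α)

/-- `(ξ, η)` is jointly SαS with spectral pair `(f, g)`. -/
def JointSAS (α : ℝ) {S : Type*} [MeasurableSpace S] (μ : Measure S) (f g : S → ℝ)
    {Ω : Type*} [MeasurableSpace Ω] (P : Measure Ω) (ξ η : Ω → ℝ) : Prop :=
  ∀ u v : ℝ, (∫ ω, Complex.exp (Complex.I * ((u * ξ ω + v * η ω : ℝ) : ℂ)) ∂P)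
    = Complex.exp (-((nrm α μ (fun s => u * f s + v * g s) ^ α : ℝ) : ℂ))


/-! ### Elementary inequalities -/

noncomputable def hh (u : ℝ) : ℝ := (1 + u ^ 2)⁻¹

lemma hh_pos (u : ℝ) : 0 < hh u := by unfold hh; positivity

lemma hh_le_one (u : ℝ) : hh u ≤ 1 := by
  unfold hh
  apply inv_le_one_of_one_le₀
  nlinarith [sq_nonneg u]

lemma hh_meas : Measurable hh := by unfold hh; fun_prop

lemma young_neg {x y i j : ℝ} (hx : 0 < x) (hy : 0 < y) (hi : 0 ≤ i) (hj : 0 ≤ j) :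
    x ^ (-i) * y ^ (-j) ≤ x ^ (-(i + j)) + y ^ (-(i + j)) := by
  have e1 : x ^ (-(i + j)) = x ^ (-i) * x ^ (-j) := by rw [← Real.rpow_add hx]; ring_nf
  have e2 : y ^ (-(i + j)) = y ^ (-i) * y ^ (-j) := by rw [← Real.rpow_add hy]; ring_nf
  have p1 := Real.rpow_pos_of_pos hx (-i)
  have p2 := Real.rpow_pos_of_pos hx (-j)
  have p3 := Real.rpow_pos_of_pos hy (-i)
  have p4 := Real.rpow_pos_of_pos hy (-j)
  rw [e1, e2]
  rcases le_total x y with h | h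
  · have := Real.rpow_le_rpow_of_nonpos hx h (by linarith : -j ≤ 0)
    nlinarith [mul_pos p3 p4]
  · have := Real.rpow_le_rpow_of_nonpos hy h (by linarith : -i ≤ 0)
    nlinarith [mul_pos p1 p2]

lemma young_pos {x y i j : ℝ} (hx : 0 < x) (hy : 0 < y) (hi : 0 ≤ i) (hj : 0 ≤ j) :
    x ^ i * y ^ j ≤ x ^ (i + j) + y ^ (i + j) := by
  have p1 := Real.rpow_pos_of_pos hx i
  have p2 := Real.rpow_pos_of_pos hx j
  have p3 := Real.rpow_pos_of_pos hy i
  have p4 := Real.rpow_pos_of_pos hy j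
  rw [Real.rpow_add hx, Real.rpow_add hy]
  rcases le_total x y with h | h
  · have := Real.rpow_le_rpow hx.le h hi
    nlinarith [mul_pos p1 p2]
  · have := Real.rpow_le_rpow hy.le h hj
    nlinarith [mul_pos p3 p4]

lemma xyz {x y z p q s : ℝ} (hx : 0 < x) (hy : 0 < y) (hz : 0 < z) (hzxy : z ≤ x + y)
    (hs0 : 0 ≤ s) (hs1 : s ≤ 1) (hsp : s ≤ p) (hsq : s ≤ q) :
    x ^ (-p) * y ^ (-q) ≤
      2 * z ^ (-s) * (x ^ (-(p + q - s)) + y ^ (-(p + q - s))) := by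
  have h1 : z ^ s ≤ x ^ s + y ^ s :=
    (Real.rpow_le_rpow hz.le hzxy hs0).trans (Real.rpow_add_le_add_rpow hx.le hy.le hs0 hs1)
  have h2 := young_neg (i := p - s) (j := q) hx hy (by linarith) (by linarith)
  have h3 := young_neg (i := p) (j := q - s) hx hy (by linarith) (by linarith)
  rw [show p - s + q = p + q - s by ring] at h2
  rw [show p + (q - s) = p + q - s by ring] at h3
  have e1 : x ^ (-(p - s)) = x ^ s * x ^ (-p) := by rw [← Real.rpow_add hx]; ring_nf
  have e2 : y ^ (-(q - s)) = y ^ s * y ^ (-q) := by rw [← Real.rpow_add hy]; ring_nf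
  rw [e1] at h2
  rw [e2] at h3
  have e3 : z ^ (-s) * z ^ s = 1 := by rw [← Real.rpow_add hz]; simp
  have hp := mul_pos (Real.rpow_pos_of_pos hx (-p)) (Real.rpow_pos_of_pos hy (-q))
  have h4 : z ^ s * (x ^ (-p) * y ^ (-q)) ≤
      2 * (x ^ (-(p + q - s)) + y ^ (-(p + q - s))) := by
    have := mul_le_mul_of_nonneg_right h1 hp.le
    nlinarith
  calc x ^ (-p) * y ^ (-q) = z ^ (-s) * (z ^ s * (x ^ (-p) * y ^ (-q))) := by
        rw [← mul_assoc, e3, one_mul]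
    _ ≤ z ^ (-s) * (2 * (x ^ (-(p + q - s)) + y ^ (-(p + q - s)))) :=
        mul_le_mul_of_nonneg_left h4 (Real.rpow_pos_of_pos hz _).le
    _ = _ := by ring

lemma int_abs_rpow {t : ℝ} (ht : t < 1) :
    IntegrableOn (fun x : ℝ => |x| ^ (-t)) (Ioc (-1) 1) := by
  have h1 : IntervalIntegrable (fun x : ℝ => |x| ^ (-t)) volume 0 1 := by
    refine (intervalIntegral.intervalIntegrable_rpow' (a := 0) (b := 1)
      (by linarith : -1 < -t)).congr ?_
    intro x hx
    rw [uIoc_of_le zero_le_one] at hx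
    simp [abs_of_pos hx.1]
  have h2 : IntervalIntegrable (fun x : ℝ => |x| ^ (-t)) volume (-1) 0 := by
    have := (IntervalIntegrable.iff_comp_neg (f := fun x : ℝ => |x| ^ (-t)) (a := 0) (b := 1)).1 h1
    simpa using this.symm
  have h3 := h2.trans h1
  rwa [intervalIntegrable_iff_integrableOn_Ioc_of_le (by norm_num)] at h3

lemma kern {t : ℝ} (ht0 : 0 ≤ t) (ht : t < 1) :
    ∃ C > (0:ℝ), ∀ w : ℝ, ∫⁻ v : ℝ, ENNReal.ofReal (|v + w| ^ (-t) * hh v) ≤ ENNReal.ofReal C := by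
  set k : ℝ → ℝ := (Ioc (-1) 1).indicator (fun x : ℝ => |x| ^ (-t)) with hk
  have hki : Integrable k := (int_abs_rpow ht).integrable_indicator measurableSet_Ioc
  have hhi : Integrable hh := integrable_inv_one_add_sq
  have f1 : ∫⁻ v, ENNReal.ofReal (k v) ≠ ⊤ := hki.lintegral_lt_top.ne
  have f2 : ∫⁻ v, ENNReal.ofReal (hh v) ≠ ⊤ := hhi.lintegral_lt_top.ne
  refine ⟨((∫⁻ v, ENNReal.ofReal (k v)) + ∫⁻ v, ENNReal.ofReal (hh v)).toReal + 1, by positivity, ?_⟩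
  intro w
  calc ∫⁻ v : ℝ, ENNReal.ofReal (|v + w| ^ (-t) * hh v)
      ≤ ∫⁻ v : ℝ, (ENNReal.ofReal (k (v + w)) + ENNReal.ofReal (hh v)) := by
        apply lintegral_mono
        intro v
        have hk0 : 0 ≤ k (v + w) := by
          apply indicator_nonneg; intro x _; positivity
        dsimp only
        rw [← ENNReal.ofReal_add hk0 (hh_pos v).le]
        apply ENNReal.ofReal_le_ofReal
        by_cases hv : v + w ∈ Ioc (-1:ℝ) 1
        · have : k (v + w) = |v + w| ^ (-t) := by simp only [hk]; rw [indicator_of_mem hv]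
          rw [this]
          have h0 : 0 ≤ |v + w| ^ (-t) := by positivity
          nlinarith [hh_pos v, hh_le_one v]
        · have h1 : 1 ≤ |v + w| := by
            by_contra hc
            push Not at hc
            rw [abs_lt] at hc
            exact hv ⟨hc.1, hc.2.le⟩
          have h2 : |v + w| ^ (-t) ≤ 1 := Real.rpow_le_one_of_one_le_of_nonpos h1 (by linarith)
          nlinarith [hh_pos v]
    _ = ((∫⁻ v, ENNReal.ofReal (k v)) + ∫⁻ v, ENNReal.ofReal (hh v)) := by
        rw [lintegral_add_right _ hh_meas.ennreal_ofReal]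
        congr 1
        exact lintegral_add_right_eq_self (μ := volume) (fun x => ENNReal.ofReal (k x)) w
    _ ≤ _ := by
        exact (ENNReal.ofReal_toReal (ENNReal.add_ne_top.2 ⟨f1, f2⟩)).symm.le.trans
          (ENNReal.ofReal_le_ofReal (by linarith))

/-- pointwise bound for the singular kernel -/
lemma ptw {a b u v p q s : ℝ} (ha : a ≠ 0) (hb : b ≠ 0) (hp : 0 < p) (hq : 0 < q)
    (hs0 : 0 ≤ s) (hs1 : s ≤ 1) (hsp : s ≤ p) (hsq : s ≤ q) :
    |u * a + v * b| ^ (-p) * |a * b| * (|u| ^ (-q) * hh u) * (|v| ^ (-q) * hh v) ≤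
      2 * (|a| ^ (1 - s) * |b| ^ (1 + s - p)) * (|u + 0| ^ (-(s + q)) * hh u) *
        (|v + u * a / b| ^ (-(p + q - s)) * hh v + |v + 0| ^ (-(p + q - s)) * hh v) := by
  have hu0 := hh_pos u
  have hv0 := hh_pos v
  have R : 0 ≤ 2 * (|a| ^ (1 - s) * |b| ^ (1 + s - p)) * (|u + 0| ^ (-(s + q)) * hh u) *
        (|v + u * a / b| ^ (-(p + q - s)) * hh v + |v + 0| ^ (-(p + q - s)) * hh v) := by positivity
  by_cases hu : u = 0
  · refine le_trans (le_of_eq ?_) R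
    subst hu; simp [Real.zero_rpow (neg_ne_zero.2 hq.ne')]
  by_cases hv : v = 0
  · refine le_trans (le_of_eq ?_) R
    subst hv; simp [Real.zero_rpow (neg_ne_zero.2 hq.ne')]
  by_cases hw : u * a + v * b = 0
  · refine le_trans (le_of_eq ?_) R
    simp [hw, Real.zero_rpow (neg_ne_zero.2 hp.ne')]
  have A := abs_pos.2 ha
  have B := abs_pos.2 hb
  have U := abs_pos.2 hu
  have V := abs_pos.2 hv
  have W := abs_pos.2 hw
  have key := xyz (x := |u * a + v * b|) (y := |v * b|) (z := |u * a|) (p := p) (q := q) (s := s)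
    W (abs_pos.2 (mul_ne_zero hv hb)) (abs_pos.2 (mul_ne_zero hu ha))
    (by have := abs_sub (u * a + v * b) (v * b); simpa using this) hs0 hs1 hsp hsq
  have ew : |u * a + v * b| = |b| * |v + u * a / b| := by
    rw [← abs_mul]; congr 1; field_simp; ring
  have X : 0 < |v + u * a / b| := by
    rw [ew] at W; exact (mul_pos_iff_of_pos_left B).1 W
  rw [ew, abs_mul v b, abs_mul u a, Real.mul_rpow B.le X.le, Real.mul_rpow V.le B.le,
    Real.mul_rpow U.le A.le, Real.mul_rpow B.le X.le, Real.mul_rpow V.le B.le] at key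
  rw [ew, Real.mul_rpow B.le X.le, abs_mul a b, add_zero, add_zero]
  have e1 : |b| ^ (-q) * |b| ^ q = 1 := by rw [← Real.rpow_add B]; simp
  have e2 : |a| ^ (1 - s) = |a| ^ (-s) * |a| := by
    nth_rw 3 [← Real.rpow_one |a|]; rw [← Real.rpow_add A]; ring_nf
  have e3 : |b| ^ (1 + s - p) = |b| ^ (-(p + q - s)) * |b| ^ q * |b| := by
    nth_rw 4 [← Real.rpow_one |b|]; rw [← Real.rpow_add B, ← Real.rpow_add B]; ring_nf
  have e4 : |u| ^ (-(s + q)) = |u| ^ (-s) * |u| ^ (-q) := by rw [← Real.rpow_add U]; ring_nf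
  rw [e2, e3, e4]
  have M : 0 ≤ |b| ^ q * |a| * |b| * (|u| ^ (-q) * hh u) * hh v := by positivity
  have := mul_le_mul_of_nonneg_right key M
  refine le_trans (le_of_eq ?_) (this.trans (le_of_eq ?_))
  · calc _ = (|b| ^ (-p) * |v + u * a / b| ^ (-p)) * (|a| * |b|) * (|u| ^ (-q) * hh u) *
        (|v| ^ (-q) * hh v) * 1 := by ring
      _ = _ := by rw [← e1]; ring
  · ring

lemma dbl {p q : ℝ} (hp : 0 < p) (hp1 : p < 1) (hq : 0 < q) (hq1 : q < 1) (hpq : p + 2 * q < 2) :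
    ∃ C > (0:ℝ), ∀ a b : ℝ, a ≠ 0 → b ≠ 0 →
      ∫⁻ u : ℝ, ∫⁻ v : ℝ, ENNReal.ofReal
        (|u * a + v * b| ^ (-p) * |a * b| * (|u| ^ (-q) * hh u) * (|v| ^ (-q) * hh v))
      ≤ ENNReal.ofReal (C * (|a| ^ (2 - p) + |b| ^ (2 - p))) := by
  obtain ⟨s, hs1, hs2⟩ : ∃ s, max 0 (p + q - 1) < s ∧ s < min p (min q (1 - q)) := by
    apply exists_between
    simp only [max_lt_iff, lt_min_iff]
    repeat' apply And.intro
    all_goals linarith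
  simp only [max_lt_iff, lt_min_iff] at hs1 hs2
  obtain ⟨h1, h2⟩ := hs1
  obtain ⟨h3, h4, h5⟩ := hs2
  obtain ⟨C1, hC1, k1⟩ := kern (t := s + q) (by linarith) (by linarith)
  obtain ⟨C2, hC2, k2⟩ := kern (t := p + q - s) (by linarith) (by linarith)
  refine ⟨2 * C1 * (C2 + C2), by positivity, ?_⟩
  intro a b ha hb
  set Q := |a| ^ (1 - s) * |b| ^ (1 + s - p) with hQ
  have hQ0 : 0 ≤ Q := by positivity
  have hQle : Q ≤ |a| ^ (2 - p) + |b| ^ (2 - p) := by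
    have := young_pos (i := 1 - s) (j := 1 + s - p) (abs_pos.2 ha) (abs_pos.2 hb)
      (by linarith) (by linarith)
    rwa [show 1 - s + (1 + s - p) = 2 - p by ring] at this
  calc _ ≤ ∫⁻ u : ℝ, ∫⁻ v : ℝ, ENNReal.ofReal (2 * Q * (|u + 0| ^ (-(s + q)) * hh u)) *
          (ENNReal.ofReal (|v + u * a / b| ^ (-(p + q - s)) * hh v) +
            ENNReal.ofReal (|v + 0| ^ (-(p + q - s)) * hh v)) := by
        apply lintegral_mono; intro u
        apply lintegral_mono; intro v
        have hu0 := hh_pos u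
        have hv0 := hh_pos v
        dsimp only
        rw [← ENNReal.ofReal_add (by positivity) (by positivity),
          ← ENNReal.ofReal_mul (by positivity)]
        exact ENNReal.ofReal_le_ofReal
          (ptw ha hb hp hq h1.le (by linarith) h3.le h4.le)
    _ ≤ ∫⁻ u : ℝ, ENNReal.ofReal (2 * Q * (|u + 0| ^ (-(s + q)) * hh u)) *
          ENNReal.ofReal (C2 + C2) := by
        apply lintegral_mono; intro u
        dsimp only
        rw [lintegral_const_mul' _ _ ENNReal.ofReal_ne_top]
        gcongr
        rw [lintegral_add_left (by have := hh_meas; fun_prop), ENNReal.ofReal_add hC2.le hC2.le]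
        exact add_le_add (k2 _) (k2 _)
    _ ≤ ENNReal.ofReal (2 * Q) * ENNReal.ofReal C1 * ENNReal.ofReal (C2 + C2) := by
        rw [lintegral_mul_const' _ _ ENNReal.ofReal_ne_top]
        gcongr
        simp_rw [ENNReal.ofReal_mul (by positivity : 0 ≤ 2 * Q)]
        rw [lintegral_const_mul' _ _ ENNReal.ofReal_ne_top]
        gcongr
        exact k1 0
    _ ≤ _ := by
        rw [← ENNReal.ofReal_mul (by positivity), ← ENNReal.ofReal_mul (by positivity)]
        apply ENNReal.ofReal_le_ofReal
        calc 2 * Q * C1 * (C2 + C2) = 2 * C1 * (C2 + C2) * Q := by ring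
          _ ≤ _ := by gcongr

/-! ### The singular term -/

lemma sing_meas {S : Type*} [MeasurableSpace S] (μ : Measure S) [SigmaFinite μ] {p q C : ℝ}
    (hC : 0 < C)
    (hdbl : ∀ a b : ℝ, a ≠ 0 → b ≠ 0 →
      ∫⁻ u : ℝ, ∫⁻ v : ℝ, ENNReal.ofReal
        (|u * a + v * b| ^ (-p) * |a * b| * (|u| ^ (-q) * hh u) * (|v| ^ (-q) * hh v))
      ≤ ENNReal.ofReal (C * (|a| ^ (2 - p) + |b| ^ (2 - p))))
    (f g : S → ℝ) (hf : Measurable f) (hg : Measurable g)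
    (hfi : Integrable (fun s => |f s| ^ (2 - p)) μ)
    (hgi : Integrable (fun s => |g s| ^ (2 - p)) μ) :
    ∫⁻ u : ℝ, ∫⁻ v : ℝ, (∫⁻ s, ENNReal.ofReal (if f s = 0 ∨ g s = 0 then (0:ℝ) else
        |u * f s + v * g s| ^ (-p) * |f s * g s|) ∂μ) *
        ENNReal.ofReal ((|u| ^ (-q) * hh u) * (|v| ^ (-q) * hh v))
      ≤ ENNReal.ofReal (C * ((∫ s, |f s| ^ (2 - p) ∂μ) + ∫ s, |g s| ^ (2 - p) ∂μ)) := by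
  have hm := hh_meas
  set F : ℝ → ℝ → S → ℝ≥0∞ := fun u v s => ENNReal.ofReal (if f s = 0 ∨ g s = 0 then (0:ℝ) else
        |u * f s + v * g s| ^ (-p) * |f s * g s|) *
        ENNReal.ofReal ((|u| ^ (-q) * hh u) * (|v| ^ (-q) * hh v)) with hF
  have hFm : Measurable (fun x : (ℝ × S) × ℝ => F x.1.1 x.2 x.1.2) := by
    simp only [hF]
    refine Measurable.mul (f := fun x : (ℝ × S) × ℝ => ENNReal.ofReal
      (if f x.1.2 = 0 ∨ g x.1.2 = 0 then (0:ℝ) else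
        |x.1.1 * f x.1.2 + x.2 * g x.1.2| ^ (-p) * |f x.1.2 * g x.1.2|))
      (g := fun x : (ℝ × S) × ℝ => ENNReal.ofReal
        ((|x.1.1| ^ (-q) * hh x.1.1) * (|x.2| ^ (-q) * hh x.2))) ?_ (by fun_prop)
    refine Measurable.ennreal_ofReal (Measurable.ite ?_ measurable_const (by fun_prop))
    have h1 : Measurable (fun x : (ℝ × S) × ℝ => f x.1.2) := by fun_prop
    have h2 : Measurable (fun x : (ℝ × S) × ℝ => g x.1.2) := by fun_prop
    exact (h1 (measurableSet_singleton 0)).union (h2 (measurableSet_singleton 0))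
  calc _ = ∫⁻ u : ℝ, ∫⁻ v : ℝ, ∫⁻ s, F u v s ∂μ := by
        simp_rw [hF, lintegral_mul_const' _ _ ENNReal.ofReal_ne_top]
    _ = ∫⁻ u : ℝ, ∫⁻ s, (∫⁻ v : ℝ, F u v s) ∂μ := by
        apply lintegral_congr; intro u
        apply lintegral_lintegral_swap
        apply Measurable.aemeasurable
        exact hFm.comp (g := fun x : (ℝ × S) × ℝ => F x.1.1 x.2 x.1.2)
          (f := fun y : ℝ × S => ((u, y.2), y.1)) (by fun_prop)
    _ = ∫⁻ s, (∫⁻ u : ℝ, ∫⁻ v : ℝ, F u v s) ∂μ := by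
        apply lintegral_lintegral_swap
        exact (hFm.lintegral_prod_right' (ν := volume)).aemeasurable
    _ ≤ ∫⁻ s, ENNReal.ofReal (C * (|f s| ^ (2 - p) + |g s| ^ (2 - p))) ∂μ := by
        apply lintegral_mono; intro s
        by_cases h : f s = 0 ∨ g s = 0
        · simp [hF, h]
        · refine le_trans (le_of_eq ?_) (hdbl (f s) (g s) (fun e => h (Or.inl e))
            (fun e => h (Or.inr e)))
          apply lintegral_congr; intro u
          apply lintegral_congr; intro v
          simp only [hF, if_neg h]
          rw [← ENNReal.ofReal_mul (by positivity)]
          congr 1; ring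
    _ = _ := by
        have hi : Integrable (fun s => C * (|f s| ^ (2 - p) + |g s| ^ (2 - p))) μ :=
          (hfi.add hgi).const_mul C
        rw [← ofReal_integral_eq_lintegral_ofReal hi
          (Eventually.of_forall fun s => by
            simp only [Pi.zero_apply]; positivity), integral_const_mul, integral_add hfi hgi]

lemma sing {S : Type*} [MeasurableSpace S] (μ : Measure S) [SigmaFinite μ] {p q C : ℝ}
    (hC : 0 < C)
    (hdbl : ∀ a b : ℝ, a ≠ 0 → b ≠ 0 →
      ∫⁻ u : ℝ, ∫⁻ v : ℝ, ENNReal.ofReal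
        (|u * a + v * b| ^ (-p) * |a * b| * (|u| ^ (-q) * hh u) * (|v| ^ (-q) * hh v))
      ≤ ENNReal.ofReal (C * (|a| ^ (2 - p) + |b| ^ (2 - p))))
    (f g : S → ℝ) (hf : AEStronglyMeasurable f μ) (hg : AEStronglyMeasurable g μ)
    (hfi : Integrable (fun s => |f s| ^ (2 - p)) μ)
    (hgi : Integrable (fun s => |g s| ^ (2 - p)) μ) :
    ∫⁻ u : ℝ, ∫⁻ v : ℝ, (∫⁻ s, ENNReal.ofReal (if f s = 0 ∨ g s = 0 then (0:ℝ) else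
        |u * f s + v * g s| ^ (-p) * |f s * g s|) ∂μ) *
        ENNReal.ofReal ((|u| ^ (-q) * hh u) * (|v| ^ (-q) * hh v))
      ≤ ENNReal.ofReal (C * ((∫ s, |f s| ^ (2 - p) ∂μ) + ∫ s, |g s| ^ (2 - p) ∂μ)) := by
  have ef := hf.ae_eq_mk
  have eg := hg.ae_eq_mk
  have ef' : (fun s => |f s| ^ (2 - p)) =ᵐ[μ] fun s => |hf.mk f s| ^ (2 - p) := by
    filter_upwards [ef] with s h; rw [h]
  have eg' : (fun s => |g s| ^ (2 - p)) =ᵐ[μ] fun s => |hg.mk g s| ^ (2 - p) := by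
    filter_upwards [eg] with s h; rw [h]
  have := sing_meas μ hC hdbl (hf.mk f) (hg.mk g) hf.stronglyMeasurable_mk.measurable
    hg.stronglyMeasurable_mk.measurable (hfi.congr ef') (hgi.congr eg')
  rw [integral_congr_ae ef', integral_congr_ae eg']
  refine le_trans (le_of_eq ?_) this
  apply lintegral_congr; intro u
  apply lintegral_congr; intro v
  congr 1
  apply lintegral_congr_ae
  filter_upwards [ef, eg] with s h1 h2
  rw [h1, h2]

/-! ### Crude bounds -/

lemma poly_exp {α c : ℝ} (hα : 1 < α) (hc : 0 < c) :
    ∃ L > (0:ℝ), ∀ u : ℝ, (1 + |u|) ^ 3 * Real.exp (-(c * |u| ^ α)) ≤ L * hh u := by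
  refine ⟨Real.exp (2 * c) * (120 / c ^ 5), by positivity, ?_⟩
  intro u
  have hx0 : 0 ≤ |u| := abs_nonneg u
  have h1 : |u| - 1 ≤ |u| ^ α := by
    rcases le_total 1 |u| with h | h
    · have := Real.rpow_le_rpow_of_exponent_le h hα.le
      rw [Real.rpow_one] at this; linarith
    · have : 0 ≤ |u| ^ α := by positivity
      linarith
  have h2 : Real.exp (-(c * |u| ^ α)) ≤ Real.exp (2 * c) * Real.exp (-(c * (1 + |u|))) := by
    rw [← Real.exp_add]; apply Real.exp_le_exp.2; nlinarith
  have h3 := Real.pow_div_factorial_le_exp (c * (1 + |u|)) (by positivity) 5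
  have h3' : (1 + |u|) ^ 5 * Real.exp (-(c * (1 + |u|))) ≤ 120 / c ^ 5 := by
    rw [Real.exp_neg, ← div_eq_mul_inv, div_le_div_iff₀ (Real.exp_pos _) (by positivity)]
    norm_num [Nat.factorial] at h3
    rw [mul_pow] at h3
    linarith
  have h4 : (1 + |u|) ^ 3 * (1 + u ^ 2) ≤ (1 + |u|) ^ 5 := by
    rw [← sq_abs u, show (1 + |u|) ^ 5 = (1 + |u|) ^ 3 * (1 + |u|) ^ 2 by ring]
    gcongr; nlinarith
  unfold hh
  rw [← div_eq_mul_inv, le_div_iff₀ (by positivity)]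
  calc _ = ((1 + |u|) ^ 3 * (1 + u ^ 2)) * Real.exp (-(c * |u| ^ α)) := by ring
    _ ≤ (1 + |u|) ^ 5 * (Real.exp (2 * c) * Real.exp (-(c * (1 + |u|)))) := by gcongr
    _ = Real.exp (2 * c) * ((1 + |u|) ^ 5 * Real.exp (-(c * (1 + |u|)))) := by ring
    _ ≤ _ := by gcongr

noncomputable def GG (β u : ℝ) : ℝ := if |u| < 1 then |u| ^ (-β) else 1

lemma GG_nonneg (β u : ℝ) : 0 ≤ GG β u := by unfold GG; split_ifs <;> positivity

lemma GG_le {β : ℝ} (hβ1 : β < 1) (u : ℝ) : GG β u ≤ |u| ^ (-β) * (1 + |u|) := by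
  unfold GG
  have h0 : 0 ≤ |u| ^ (-β) := by positivity
  split_ifs with h
  · nlinarith [abs_nonneg u]
  · push Not at h
    have h1 : 1 ≤ |u| ^ (-β + 1) := Real.one_le_rpow h (by linarith)
    rw [Real.rpow_add (by linarith), Real.rpow_one] at h1
    linarith

lemma spow_abs (a p : ℝ) : |spow a p| ≤ |a| ^ p := by
  unfold spow
  rw [abs_mul, abs_of_nonneg (by positivity : 0 ≤ |a| ^ p)]
  have : |Real.sign a| ≤ 1 := by
    rcases Real.sign_apply_eq a with h | h | h <;> simp [h]
  have h0 : 0 ≤ |a| ^ p := by positivity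
  nlinarith

lemma add_rpow_four {x y α : ℝ} (hα : 1 < α) (hα2 : α < 2) (hx : 0 ≤ x) (hy : 0 ≤ y) :
    (x + y) ^ α ≤ 4 * (x ^ α + y ^ α) := by
  have h2 : (2:ℝ) ^ α ≤ 4 := by
    have := Real.rpow_le_rpow_of_exponent_le (by norm_num : (1:ℝ) ≤ 2) hα2.le
    norm_num at this; exact this
  have hx' : 0 ≤ x ^ α := by positivity
  have hy' : 0 ≤ y ^ α := by positivity
  rcases le_total x y with h | h
  · have := Real.rpow_le_rpow (by positivity) (by linarith : x + y ≤ 2 * y) (by linarith : 0 ≤ α)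
    rw [Real.mul_rpow (by norm_num) hy] at this
    nlinarith
  · have := Real.rpow_le_rpow (by positivity) (by linarith : x + y ≤ 2 * x) (by linarith : 0 ≤ α)
    rw [Real.mul_rpow (by norm_num) hx] at this
    nlinarith

lemma spow_int {S : Type*} [MeasurableSpace S] (μ : Measure S) {α : ℝ} (hα1 : 1 < α) (hα2 : α < 2)
    (f g : S → ℝ) (hfi : Integrable (fun s => |f s| ^ α) μ)
    (hgi : Integrable (fun s => |g s| ^ α) μ) {M : ℝ} (hM : 1 ≤ M) (h k : S → ℝ)
    (hh' : ∀ s, |h s| ≤ M * (|f s| + |g s|)) (hk : ∀ s, |k s| ≤ |f s| + |g s|) :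
    |∫ s, spow (h s) (α - 1) * k s ∂μ| ≤
      M * (4 * ((∫ s, |f s| ^ α ∂μ) + ∫ s, |g s| ^ α ∂μ)) := by
  rw [← integral_add hfi hgi, ← integral_const_mul, ← integral_const_mul]
  rw [← Real.norm_eq_abs]
  apply norm_integral_le_of_norm_le (((hfi.add hgi).const_mul 4).const_mul M)
  refine Eventually.of_forall fun s => ?_
  rw [Real.norm_eq_abs, abs_mul]
  set x := |f s| + |g s| with hx
  have hx0 : 0 ≤ x := by positivity
  have hMp : M ^ (α - 1) ≤ M := by
    have := Real.rpow_le_rpow_of_exponent_le hM (by linarith : α - 1 ≤ 1)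
    rwa [Real.rpow_one] at this
  have e : x ^ (α - 1) * x = x ^ α := by
    rcases hx0.eq_or_lt with h0 | h0
    · rw [← h0, Real.zero_rpow (by linarith : α ≠ 0)]; simp
    · nth_rw 2 [← Real.rpow_one x]; rw [← Real.rpow_add h0]; ring_nf
  calc |spow (h s) (α - 1)| * |k s| ≤ (M * x) ^ (α - 1) * x := by
        gcongr
        · exact (spow_abs _ _).trans (Real.rpow_le_rpow (abs_nonneg _) (hh' s) (by linarith))
        · exact hk s
    _ = M ^ (α - 1) * x ^ α := by
        rw [Real.mul_rpow (by linarith) hx0, mul_assoc, e]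
    _ ≤ M * (4 * (|f s| ^ α + |g s| ^ α)) := by
        gcongr
        exact add_rpow_four hα1 hα2 (abs_nonneg _) (abs_nonneg _)

lemma nrm_pow {S : Type*} [MeasurableSpace S] (μ : Measure S) {α : ℝ} (hα1 : 1 < α)
    (f : S → ℝ) : nrm α μ f ^ α = ∫ s, |f s| ^ α ∂μ := by
  unfold nrm
  rw [← Real.rpow_mul (integral_nonneg fun s => by positivity)]
  rw [one_div, inv_mul_cancel₀ (by linarith), Real.rpow_one]

lemma nrm_smul_pow {S : Type*} [MeasurableSpace S] (μ : Measure S) {α : ℝ} (hα1 : 1 < α)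
    (f : S → ℝ) (u : ℝ) : nrm α μ (fun s => u * f s) ^ α = |u| ^ α * nrm α μ f ^ α := by
  rw [nrm_pow μ hα1, nrm_pow μ hα1, ← integral_const_mul]
  congr 1; ext s
  rw [abs_mul, Real.mul_rpow (abs_nonneg _) (abs_nonneg _)]

lemma final_aux {β c α L u v A M : ℝ} (hβ1 : β < 1) (hA : 0 ≤ A)
    (hL : ∀ u : ℝ, (1 + |u|) ^ 3 * Real.exp (-(c * |u| ^ α)) ≤ L * hh u)
    (hM : M ≤ ((1 + |u|) * (1 + |v|)) ^ 2) :
    A * M * (Real.exp (-(c * |u| ^ α)) * Real.exp (-(c * |v| ^ α))) * GG β u * GG β v ≤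
      A * L ^ 2 * ((|u| ^ (-β) * hh u) * (|v| ^ (-β) * hh v)) := by
  have g1 := GG_le hβ1 u
  have g2 := GG_le hβ1 v
  have := GG_nonneg β u
  have := GG_nonneg β v
  have hu := hh_pos u
  have hv := hh_pos v
  have := hL u
  have := hL v
  have hu3 : 0 ≤ L * hh u := le_trans (by positivity) (hL u)
  calc _ ≤ A * ((1 + |u|) * (1 + |v|)) ^ 2 *
          (Real.exp (-(c * |u| ^ α)) * Real.exp (-(c * |v| ^ α))) *
          (|u| ^ (-β) * (1 + |u|)) * (|v| ^ (-β) * (1 + |v|)) := by gcongr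
    _ = A * (|u| ^ (-β) * |v| ^ (-β)) * (((1 + |u|) ^ 3 * Real.exp (-(c * |u| ^ α))) *
          ((1 + |v|) ^ 3 * Real.exp (-(c * |v| ^ α)))) := by ring
    _ ≤ A * (|u| ^ (-β) * |v| ^ (-β)) * ((L * hh u) * (L * hh v)) := by gcongr
    _ = _ := by ring

lemma final_aux1 {β c α L u v A M : ℝ} (hβ1 : β < 1) (hA : 0 ≤ A)
    (hL : ∀ u : ℝ, (1 + |u|) ^ 3 * Real.exp (-(c * |u| ^ α)) ≤ L * hh u)
    (hM : M ≤ ((1 + |u|) * (1 + |v|)) ^ 2) :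
    A * M * (Real.exp (-(c * |u| ^ α)) * Real.exp (-(c * |v| ^ α))) * GG β u ≤
      A * L ^ 2 * ((|u| ^ (-β) * hh u) * (|v + 0| ^ (-(0:ℝ)) * hh v)) := by
  have g1 := GG_le hβ1 u
  have := GG_nonneg β u
  have hu := hh_pos u
  have hv := hh_pos v
  have := hL u
  have := hL v
  have hu3 : 0 ≤ L * hh u := le_trans (by positivity) (hL u)
  have h1v : 1 ≤ 1 + |v| := by linarith [abs_nonneg v]
  calc _ ≤ A * ((1 + |u|) * (1 + |v|)) ^ 2 *
          (Real.exp (-(c * |u| ^ α)) * Real.exp (-(c * |v| ^ α))) *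
          (|u| ^ (-β) * (1 + |u|)) := by gcongr
    _ ≤ A * ((1 + |u|) * (1 + |v|)) ^ 2 *
          (Real.exp (-(c * |u| ^ α)) * Real.exp (-(c * |v| ^ α))) *
          (|u| ^ (-β) * (1 + |u|)) * (1 + |v|) := le_mul_of_one_le_right (by positivity) h1v
    _ = A * |u| ^ (-β) * (((1 + |u|) ^ 3 * Real.exp (-(c * |u| ^ α))) *
          ((1 + |v|) ^ 3 * Real.exp (-(c * |v| ^ α)))) := by ring
    _ ≤ A * |u| ^ (-β) * ((L * hh u) * (L * hh v)) := by gcongr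
    _ = _ := by rw [neg_zero, Real.rpow_zero]; ring

lemma D_bounds {S : Type*} [MeasurableSpace S] (μ : Measure S) {α ε₂ nf ng c : ℝ}
    (hα1 : 1 < α) (hα2 : α < 2)
    (f g : S → ℝ) (hf : MemLalpha α μ f) (hg : MemLalpha α μ g)
    (hnf : nrm α μ f = nf) (hng : nrm α μ g = ng) (h2 : A2 α ε₂ μ f g)
    (hc1 : c ≤ nf ^ α) (hc2 : c ≤ ng ^ α) (hc3 : c ≤ ε₂ * nf ^ α) (hc4 : c ≤ ε₂ * ng ^ α)
    (u v K M E : ℝ) (hK : K = 4 * (nf ^ α + ng ^ α)) (hM : M = (1 + |u|) * (1 + |v|))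
    (hE : E = Real.exp (-(c * |u| ^ α)) * Real.exp (-(c * |v| ^ α))) :
    |D1 α μ f g u v| ≤ 4 * K * M * E ∧
    |D2 α μ f g u v| ≤ 2 * |∫ s, (if f s = 0 ∨ g s = 0 then (0:ℝ) else
        |u * f s + v * g s| ^ (α - 2) * (f s * g s)) ∂μ| * E + 8 * K ^ 2 * M ^ 2 * E := by
  have hu0 := abs_nonneg u
  have hv0 := abs_nonneg v
  have hM1 : 1 ≤ M := by rw [hM]; nlinarith
  have hMu : |u| ≤ M := by rw [hM]; nlinarith
  have hMv : |v| ≤ M := by rw [hM]; nlinarith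
  have hU : 0 ≤ |u| ^ α := by positivity
  have hV : 0 ≤ |v| ^ α := by positivity
  have hKe : 4 * ((∫ s, |f s| ^ α ∂μ) + ∫ s, |g s| ^ α ∂μ) = K := by
    rw [← nrm_pow μ hα1, ← nrm_pow μ hα1, hnf, hng, hK]
  have b : ∀ (h k : S → ℝ), (∀ s, |h s| ≤ M * (|f s| + |g s|)) → (∀ s, |k s| ≤ |f s| + |g s|) →
      |∫ s, spow (h s) (α - 1) * k s ∂μ| ≤ M * K := by
    intro h k hh1 hk1
    rw [← hKe]
    exact spow_int μ hα1 hα2 f g hf.2 hg.2 hM1 h k hh1 hk1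
  have q1 : ∀ s, |u * f s| ≤ M * (|f s| + |g s|) := by
    intro s; rw [abs_mul]
    exact mul_le_mul hMu (by linarith [abs_nonneg (g s)]) (abs_nonneg _) (by linarith)
  have q2 : ∀ s, |v * g s| ≤ M * (|f s| + |g s|) := by
    intro s; rw [abs_mul]
    exact mul_le_mul hMv (by linarith [abs_nonneg (f s)]) (abs_nonneg _) (by linarith)
  have q3 : ∀ s, |u * f s + v * g s| ≤ M * (|f s| + |g s|) := by
    intro s
    refine (abs_add_le _ _).trans ?_
    rw [abs_mul, abs_mul, mul_add]
    gcongr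
  have r1 : ∀ s, |f s| ≤ |f s| + |g s| := fun s => by linarith [abs_nonneg (g s)]
  have r2 : ∀ s, |g s| ≤ |f s| + |g s| := fun s => by linarith [abs_nonneg (f s)]
  have I1 := b _ _ q3 r1
  have I2 := b _ _ q3 r2
  have I3 := b _ _ q1 r1
  have I4 := b _ _ q2 r2
  have E1 : Real.exp (-(nrm α μ (fun s => u * f s + v * g s) ^ α)) ≤ E := by
    rw [hE, ← Real.exp_add]
    apply Real.exp_le_exp.2
    have := h2 u v
    rw [hnf, hng] at this
    nlinarith
  have E2 : Real.exp (-(nrm α μ (fun s => u * f s) ^ α) - nrm α μ (fun s => v * g s) ^ α) ≤ E := by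
    rw [hE, ← Real.exp_add, nrm_smul_pow μ hα1, nrm_smul_pow μ hα1, hnf, hng]
    apply Real.exp_le_exp.2
    nlinarith
  have hKM : 0 ≤ M * K := (abs_nonneg _).trans I1
  have hE0 : 0 ≤ E := by rw [hE]; positivity
  unfold D1 D2
  set e1 := Real.exp (-(nrm α μ (fun s => u * f s + v * g s) ^ α))
  set e2 := Real.exp (-(nrm α μ (fun s => u * f s) ^ α) - nrm α μ (fun s => v * g s) ^ α)
  have e1p : 0 ≤ e1 := (Real.exp_pos _).le
  have e2p : 0 ≤ e2 := (Real.exp_pos _).le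
  have hα0 : 0 ≤ α := by linarith
  constructor
  · refine (abs_add_le _ _).trans ?_
    rw [abs_mul, abs_mul, abs_mul, abs_mul, abs_of_nonneg e1p, abs_of_nonneg e2p, abs_neg,
      abs_of_nonneg hα0]
    calc _ ≤ 2 * (M * K) * E + 2 * (M * K) * E := by gcongr
      _ = _ := by ring
  · refine (abs_sub _ _).trans ?_
    refine (add_le_add_left (abs_add_le _ _) _).trans ?_
    simp only [abs_mul, abs_neg, abs_of_nonneg e1p, abs_of_nonneg e2p, abs_of_nonneg hα0,
      abs_of_nonneg (by linarith : 0 ≤ α - 1), abs_pow]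
    have ha1 : α * (α - 1) ≤ 2 := by nlinarith
    have ha2 : α ^ 2 ≤ 4 := by nlinarith
    calc _ ≤ 2 * |∫ s, (if f s = 0 ∨ g s = 0 then (0:ℝ) else
        |u * f s + v * g s| ^ (α - 2) * (f s * g s)) ∂μ| * E +
          4 * (M * K) * (M * K) * E + 4 * (M * K) * (M * K) * E := by gcongr
      _ = _ := by ring

/-- Paper's Lemma 3.6. -/
theorem stmt11 (α β ε₁ ε₂ nf ng : ℝ) (hα1 : 1 < α) (hα2 : α < 2)
    (hβ0 : 0 < β) (hβ : β < α / 2) (hε₁ : 0 < ε₁) (hε₂ : 0 < ε₂)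
    (hnf : 0 < nf) (hng : 0 < ng) :
    ∃ C > (0:ℝ), ∀ (S : Type) [MeasurableSpace S] (μ : Measure S) [SigmaFinite μ]
      (f g : S → ℝ), MemLalpha α μ f → MemLalpha α μ g →
      nrm α μ f = nf → nrm α μ g = ng → A1 α ε₁ μ f g → A2 α ε₂ μ f g →
        (∫⁻ u : ℝ, ∫⁻ v : ℝ, ENNReal.ofReal (|D1 α μ f g u v| *
            (if |u| < 1 then |u| ^ (-β) else 1))
          ≤ ENNReal.ofReal C) ∧
        (∫⁻ u : ℝ, ∫⁻ v : ℝ, ENNReal.ofReal (|D2 α μ f g u v| *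
            (if |u| < 1 then |u| ^ (-β) else 1) *
            (if |v| < 1 then |v| ^ (-β) else 1))
          ≤ ENNReal.ofReal C) := by
  have hβ1 : β < 1 := by linarith
  have hF : 0 < nf ^ α := by positivity
  have hG : 0 < ng ^ α := by positivity
  obtain ⟨c, hc0, hc⟩ : ∃ c > 0, c ≤ min (min (nf ^ α) (ng ^ α))
      (min (ε₂ * nf ^ α) (ε₂ * ng ^ α)) :=
    ⟨_, by apply lt_min <;> apply lt_min <;> positivity, le_rfl⟩
  simp only [le_min_iff] at hc
  obtain ⟨⟨hc1, hc2⟩, hc3, hc4⟩ := hc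
  obtain ⟨L, hL0, hL⟩ := poly_exp hα1 hc0
  obtain ⟨Cq, hCq, kq⟩ := kern hβ0.le hβ1
  obtain ⟨Cz, hCz, kz⟩ := kern (le_refl 0) zero_lt_one
  obtain ⟨Cd, hCd, hd⟩ := dbl (p := 2 - α) (q := β) (by linarith) (by linarith) hβ0 hβ1 (by linarith)
  have kq' : ∫⁻ v : ℝ, ENNReal.ofReal (|v| ^ (-β) * hh v) ≤ ENNReal.ofReal Cq := by
    simpa using kq 0
  set K := 4 * (nf ^ α + ng ^ α) with hK
  have hK0 : 0 < K := by positivity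
  set B1 := 4 * K * L ^ 2 * (Cq * Cz) with hB1
  set B2 := 2 * L ^ 2 * (Cd * (nf ^ α + ng ^ α)) with hB2
  set B3 := 8 * K ^ 2 * L ^ 2 * (Cq * Cq) with hB3
  have hm := hh_meas
  refine ⟨B1 + (B2 + B3), by positivity, ?_⟩
  intro S _ μ _ f g hf hg hnf' hng' _ hA2
  have hD := fun u v => D_bounds μ hα1 hα2 f g hf hg hnf' hng' hA2 hc1 hc2 hc3 hc4 u v K _ _ hK
    rfl rfl
  constructor
  · change ∫⁻ u : ℝ, ∫⁻ v : ℝ, ENNReal.ofReal (|D1 α μ f g u v| * GG β u) ≤ _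
    calc _ ≤ ∫⁻ u : ℝ, ∫⁻ v : ℝ, ENNReal.ofReal (4 * K * L ^ 2 * (|u| ^ (-β) * hh u)) *
            ENNReal.ofReal (|v + 0| ^ (-(0:ℝ)) * hh v) := by
          apply lintegral_mono; intro u
          apply lintegral_mono; intro v
          dsimp only
          have := hh_pos u
          rw [← ENNReal.ofReal_mul (by positivity)]
          apply ENNReal.ofReal_le_ofReal
          have h1 : (1:ℝ) ≤ (1 + |u|) * (1 + |v|) := by nlinarith [abs_nonneg u, abs_nonneg v]
          refine (mul_le_mul_of_nonneg_right (hD u v).1 (GG_nonneg β u)).trans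
            ((final_aux1 (M := (1 + |u|) * (1 + |v|)) hβ1 (by positivity) hL
              (by nlinarith)).trans (le_of_eq (by ring)))
      _ ≤ ∫⁻ u : ℝ, ENNReal.ofReal (4 * K * L ^ 2) * ENNReal.ofReal (|u| ^ (-β) * hh u) *
            ENNReal.ofReal Cz := by
          apply lintegral_mono; intro u
          dsimp only
          rw [lintegral_const_mul' _ _ ENNReal.ofReal_ne_top, ENNReal.ofReal_mul (by positivity)]
          gcongr
          exact kz 0
      _ ≤ ENNReal.ofReal (4 * K * L ^ 2) * ENNReal.ofReal Cq * ENNReal.ofReal Cz := by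
          rw [lintegral_mul_const' _ _ ENNReal.ofReal_ne_top,
            lintegral_const_mul' _ _ ENNReal.ofReal_ne_top]
          gcongr
      _ ≤ _ := by
          rw [← ENNReal.ofReal_mul (by positivity), ← ENNReal.ofReal_mul (by positivity)]
          apply ENNReal.ofReal_le_ofReal
          have : 0 ≤ B2 + B3 := by positivity
          rw [hB1]; linarith
  · change ∫⁻ u : ℝ, ∫⁻ v : ℝ, ENNReal.ofReal (|D2 α μ f g u v| * GG β u * GG β v) ≤ _
    set T : ℝ → ℝ → ℝ≥0∞ := fun u v =>
      (∫⁻ s, ENNReal.ofReal (if f s = 0 ∨ g s = 0 then (0:ℝ) else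
        |u * f s + v * g s| ^ (-(2 - α)) * |f s * g s|) ∂μ) *
        ENNReal.ofReal ((|u| ^ (-β) * hh u) * (|v| ^ (-β) * hh v)) with hT
    have hTi : ∫⁻ u : ℝ, ∫⁻ v : ℝ, T u v ≤ ENNReal.ofReal (Cd * (nf ^ α + ng ^ α)) := by
      have hfi := hf.2
      have hgi := hg.2
      have e : α = 2 - (2 - α) := by ring
      have := sing μ hCd hd f g hf.1 hg.1 (by rw [← e]; exact hfi) (by rw [← e]; exact hgi)
      rw [← e, ← nrm_pow μ hα1, ← nrm_pow μ hα1, hnf', hng'] at this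
      exact this
    calc _ ≤ ∫⁻ u : ℝ, ∫⁻ v : ℝ, (ENNReal.ofReal (2 * L ^ 2) * T u v +
            ENNReal.ofReal (8 * K ^ 2 * L ^ 2 * (|u| ^ (-β) * hh u)) *
            ENNReal.ofReal (|v| ^ (-β) * hh v)) := by
          apply lintegral_mono; intro u
          apply lintegral_mono; intro v
          dsimp only
          have hu := hh_pos u
          have hv := hh_pos v
          set I := ∫ s, (if f s = 0 ∨ g s = 0 then (0:ℝ) else
            |u * f s + v * g s| ^ (α - 2) * (f s * g s)) ∂μ with hI
          have hIT : ENNReal.ofReal |I| ≤ ∫⁻ s, ENNReal.ofReal (if f s = 0 ∨ g s = 0 then (0:ℝ) else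
              |u * f s + v * g s| ^ (-(2 - α)) * |f s * g s|) ∂μ := by
            rw [← Real.enorm_eq_ofReal_abs]
            refine (enorm_integral_le_lintegral_enorm _).trans (le_of_eq ?_)
            apply lintegral_congr; intro s
            rw [Real.enorm_eq_ofReal_abs]
            congr 1
            split_ifs with h
            · simp
            · rw [abs_mul, abs_of_nonneg (by positivity), neg_sub]
          have h1 : (1:ℝ) ≤ (1 + |u|) * (1 + |v|) := by nlinarith [abs_nonneg u, abs_nonneg v]
          have P1 := final_aux (u := u) (v := v) (A := 2 * |I|) (M := 1) hβ1 (by positivity) hL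
            (by nlinarith)
          have P2 := final_aux (u := u) (v := v) (A := 8 * K ^ 2)
            (M := ((1 + |u|) * (1 + |v|)) ^ 2) hβ1 (by positivity) hL le_rfl
          have P3 : |D2 α μ f g u v| * GG β u * GG β v ≤
              2 * L ^ 2 * (|I| * ((|u| ^ (-β) * hh u) * (|v| ^ (-β) * hh v))) +
              8 * K ^ 2 * L ^ 2 * (|u| ^ (-β) * hh u) * (|v| ^ (-β) * hh v) := by
            have := mul_le_mul_of_nonneg_right
              (mul_le_mul_of_nonneg_right (hD u v).2 (GG_nonneg β u)) (GG_nonneg β v)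
            rw [← hI] at this
            refine this.trans ?_
            linarith
          refine (ENNReal.ofReal_le_ofReal P3).trans ?_
          rw [ENNReal.ofReal_add (by positivity) (by positivity),
            ENNReal.ofReal_mul (by positivity : 0 ≤ 2 * L ^ 2),
            ENNReal.ofReal_mul (abs_nonneg I),
            ENNReal.ofReal_mul (by positivity : 0 ≤ 8 * K ^ 2 * L ^ 2 * (|u| ^ (-β) * hh u))]
          gcongr
          exact mul_le_mul_left hIT _
      _ ≤ ∫⁻ u : ℝ, (ENNReal.ofReal (2 * L ^ 2) * (∫⁻ v : ℝ, T u v) +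
            ENNReal.ofReal (8 * K ^ 2 * L ^ 2) * ENNReal.ofReal (|u| ^ (-β) * hh u) *
            ENNReal.ofReal Cq) := by
          apply lintegral_mono; intro u
          dsimp only
          rw [lintegral_add_right _ (by fun_prop), lintegral_const_mul' _ _ ENNReal.ofReal_ne_top,
            lintegral_const_mul' _ _ ENNReal.ofReal_ne_top,
            ENNReal.ofReal_mul (by positivity : 0 ≤ 8 * K ^ 2 * L ^ 2)]
          gcongr
      _ ≤ ENNReal.ofReal (2 * L ^ 2) * ENNReal.ofReal (Cd * (nf ^ α + ng ^ α)) +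
            ENNReal.ofReal (8 * K ^ 2 * L ^ 2) * ENNReal.ofReal Cq * ENNReal.ofReal Cq := by
          rw [lintegral_add_right _ (by fun_prop), lintegral_const_mul' _ _ ENNReal.ofReal_ne_top,
            lintegral_mul_const' _ _ ENNReal.ofReal_ne_top,
            lintegral_const_mul' _ _ ENNReal.ofReal_ne_top]
          gcongr
      _ ≤ _ := by
          rw [← ENNReal.ofReal_mul (by positivity), ← ENNReal.ofReal_mul (by positivity),
            ← ENNReal.ofReal_mul (by positivity),
            ← ENNReal.ofReal_add (by positivity) (by positivity)]
          apply ENNReal.ofReal_le_ofReal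
          have : 0 ≤ B1 := by positivity
          rw [hB2, hB3]; linarith
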